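/- Let w be a Kreweras word of length 3n. Then for every i ∈ {1,…,3n}, ε_w(i) ∈ {B, C}; moreover, if w_{σ_w(i)} ≠ A then ε_w(i) = w_{σ_w(i)}, and if w_{σ_w(i)} = A then ε_w(i) = w_{σ_w(σ_w(i))}. -/

import Mathlib

/-- The three letters of a Kreweras word. -/
inductive KLetter : Type
  | A | B | C
deriving DecidableEq, Repr

open KLetter

/-- `w` is a Kreweras word of length `3 * n`: it has `n` `A`'s, `n` `B`'s, `n` `C`'s,
and every prefix has at least as many `A`'s as `B`'s and at least as many `A`'s as `C`'s. -/
def IsKrewerasWord (n : ℕ) (w : List KLetter) : Prop :=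
  w.length = 3 * n ∧ w.count A = n ∧ w.count B = n ∧ w.count C = n ∧
  ∀ k : ℕ, (w.take k).count B ≤ (w.take k).count A ∧
           (w.take k).count C ≤ (w.take k).count A

/-- `kiota w` is the smallest index `ι ≥ 1` (1-indexed) such that the prefix of
length `ι` of `w` has equally many `A`'s as `B`'s, or equally many `A`'s as `C`'s
(and `0` if no such index exists). -/
def kiota (w : List KLetter) : ℕ :=
  (((List.range (w.length + 1)).filter fun k =>
      decide (1 ≤ k) &&
      (((w.take k).count A == (w.take k).count B) ||
       ((w.take k).count A == (w.take k).count C))).headD 0)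

/-- Promotion of a Kreweras word:
`pro w = (w₂, …, w_{ι-1}, A, w_{ι+1}, …, w_{3n}, w_ι)` where `ι = kiota w`. -/
def pro (w : List KLetter) : List KLetter :=
  ((w.drop 1).set (kiota w - 2) A) ++ [w.getD (kiota w - 1) A]

/-- The trip permutation `σ_w` of a Kreweras word of length `3 * n`, as a function on
1-indexed positions: `σ_w i` is the unique element of `{1, …, 3n}` congruent to
`kiota (pro^[i-1] w) + i - 1` modulo `3 * n`. -/
def ksigma (n : ℕ) (w : List KLetter) (i : ℕ) : ℕ :=
  (kiota (pro^[i - 1] w) + i - 2) % (3 * n) + 1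

/-- `keps w i` is the letter of `pro^[i-1] w` in (1-indexed) position `kiota (pro^[i-1] w)`. -/
def keps (w : List KLetter) (i : ℕ) : KLetter :=
  (pro^[i - 1] w).getD (kiota (pro^[i - 1] w) - 1) A

/-- The negation swapping `B` and `C` (and fixing `A`). -/
def negL : KLetter → KLetter
  | A => A
  | B => C
  | C => B

open Classical in
/-- The involution `τ_i` on Kreweras words of length `3 * n`: swap the letters in
(1-indexed) positions `i` and `i + 1` if the result is again a Kreweras word,
and otherwise do nothing. -/
noncomputable def tau (n i : ℕ) (w : List KLetter) : List KLetter :=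
  let w' := (w.set (i - 1) (w.getD i A)).set i (w.getD (i - 1) A)
  if IsKrewerasWord n w' then w' else w

/-- `tauDown n j = τ_j ∘ τ_{j-1} ∘ ⋯ ∘ τ_1`. -/
noncomputable def tauDown (n : ℕ) : ℕ → List KLetter → List KLetter
  | 0, w => w
  | j + 1, w => tau n (j + 1) (tauDown n j w)

/-- `evacAux n j = (tauDown n 1) ∘ (tauDown n 2) ∘ ⋯ ∘ (tauDown n j)`. -/
noncomputable def evacAux (n : ℕ) : ℕ → List KLetter → List KLetter
  | 0, w => w
  | j + 1, w => evacAux n j (tauDown n (j + 1) w)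

/-- Evacuation on Kreweras words of length `3 * n`:
`evac = (τ_1) ∘ (τ_2 ∘ τ_1) ∘ ⋯ ∘ (τ_{3n-1} ∘ ⋯ ∘ τ_2 ∘ τ_1)`. -/
noncomputable def evac (n : ℕ) (w : List KLetter) : List KLetter :=
  evacAux n (3 * n - 1) w

/-- `tauAsc n k c = τ_{k+c-1} ∘ ⋯ ∘ τ_{k+1} ∘ τ_k`. -/
noncomputable def tauAsc (n k : ℕ) : ℕ → List KLetter → List KLetter
  | 0, w => w
  | j + 1, w => tau n (k + j) (tauAsc n k j w)

/-- `evacStarAux n j = (tauAsc n 1 (3n-1)) ∘ (tauAsc n 2 (3n-2)) ∘ ⋯ ∘ (tauAsc n j (3n-j))`. -/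
noncomputable def evacStarAux (n : ℕ) : ℕ → List KLetter → List KLetter
  | 0, w => w
  | j + 1, w => evacStarAux n j (tauAsc n (j + 1) (3 * n - (j + 1)) w)

/-- Dual evacuation on Kreweras words of length `3 * n`:
`evac* = (τ_{3n-1} ∘ ⋯ ∘ τ_1) ∘ (τ_{3n-1} ∘ ⋯ ∘ τ_2) ∘ ⋯ ∘ (τ_{3n-1})`. -/
noncomputable def evacStar (n : ℕ) (w : List KLetter) : List KLetter :=
  evacStarAux n (3 * n - 1) w

/-- The three-element "V"-shaped poset: `a < b`, `a < c`, with `b`, `c` incomparable. -/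
inductive VP : Type
  | a | b | c
deriving DecidableEq

instance : PartialOrder VP where
  le x y := x = y ∨ x = VP.a
  le_refl x := Or.inl rfl
  le_trans x y z hxy hyz := by
    rcases hxy with rfl | rfl
    · exact hyz
    · exact Or.inr rfl
  le_antisymm x y hxy hyx := by
    rcases hxy with rfl | rfl
    · rfl
    · rcases hyx with rfl | rfl <;> rfl

/-- The labeling of elements of `V(n) = VP × Fin n` by letters. -/
def vlabel {n : ℕ} (p : VP × Fin n) : KLetter :=
  match p.1 with
  | VP.a => A
  | VP.b => B
  | VP.c => C

/-- `L` is a linear extension of `V(n) = VP × Fin n` (with the product order):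
a list of all elements of `V(n)`, each appearing once, such that `L_i ≤ L_j`
implies `i ≤ j`. -/
def IsLinearExtension (n : ℕ) (L : List (VP × Fin n)) : Prop :=
  L.Nodup ∧ (∀ p : VP × Fin n, p ∈ L) ∧
  ∀ i j : Fin L.length, L.get i ≤ L.get j → (i : ℕ) ≤ (j : ℕ)

/-- A connected Kreweras word: a Kreweras word of length `3 * n` having no proper
nonempty consecutive substring which is itself a Kreweras word. -/
def ConnectedKrewerasWord (n : ℕ) (w : List KLetter) : Prop :=
  IsKrewerasWord n w ∧
  ∀ (u : List KLetter) (m : ℕ), u <:+: w → u ≠ [] → u ≠ w → ¬ IsKrewerasWord m u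

/-!
Write `w`, `pro w`, `pro (pro w)`, … below each other, each shifted one column to the right of the
previous one, with rows and columns counted from `0` and `N = 3 * n`: row `t` occupies the columns
`t, …, t + N - 1`. In the columns shared with row `t`, row `t + 1` differs from it in a single one,
the hit column `s t`, whose letter of colour `e t` becomes an `A`; and in the new column `t + N`
row `t + 1` has a letter of colour `e t`. As a letter can only turn into an `A`, a hit in a column
`j < N` hits the letter `w` has there, which settles the case `s t < N`.

Now let `s t = j + N`. That column was created with colour `e j`, so `e t = e j`, and it remains to
see that `w` has an `A` in column `j` and that then `s j < N`. The latter follows by comparing the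
heights of row `j + 1` with those of the rows above it. For the former, look in each row at the wall
between the columns `N - 1` and `N`, at the `A`s not matched left of it and at the letters not
matched right of it. Moving these letters across the wall one after the other determines a set of
columns, the `exits`. A hit at a column `c` left of the wall adds exactly `c` to this set. A hit
right of the wall cancels a pair of unmatched letters and removes exactly two columns `j` from the
set, for both of which the letter in column `j + N` is matched right of the wall from then on and is
therefore never hit. Row `N` has no column left of the wall, so by then the set is empty: if `w` has
no `A` in column `j`, so that column `j` is hit at some time, then column `j + N` is not hit before
row `N`.
-/

/-- The colour of a letter: `none` for `A`, and the two Booleans for `B` and `C`. -/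
def KLetter.color : KLetter → Option Bool
  | A => none
  | B => some true
  | C => some false

/-- The change of the height in colour `b`, i.e. of the number of `A`s minus the number of letters
of colour `b`, when a letter is read. -/
def rise (b : Bool) : Option Bool → ℤ
  | none => 1
  | some c => if c = b then -1 else 0

/-! ### Letters crossing a wall -/

section Exits

/-- The move of a letter of colour `e` with index `m` across a two-coloured set of unmatched `A`s:
it is matched with the least element of colour `e`; in the other colour it takes the place of the
greatest element that is not above any element of colour `e`, if there is one. -/
def pop (e : Bool) (m : ℕ) (S : Bool → Set ℕ) : Bool → Set ℕ := fun b =>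
  if b = e then {a ∈ S e | ¬IsLeast (S e) a}
  else {a ∈ S b | ¬IsGreatest (S b ∩ lowerBounds (S e)) a} ∪
    {a | a = m ∧ (S b ∩ lowerBounds (S e)).Nonempty}

/-- The two-coloured set `S` with `c` added in colour `e`. -/
def push (e : Bool) (c : ℕ) (S : Bool → Set ℕ) : Bool → Set ℕ :=
  Function.update S e (insert c (S e))

/-- The unmatched `A`s met when the letters `f (m - 1), …, f 0`, in this order, move across `S`. -/
def exits (f : ℕ → Option Bool) : ℕ → (Bool → Set ℕ) → Set ℕ
  | 0, _ => ∅
  | m + 1, S =>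
    match f m with
    | none => exits f m S
    | some e => {x | IsLeast (S e) x} ∪ exits f m (pop e m S)

variable {f g : ℕ → Option Bool} {S : Bool → Set ℕ} {e : Bool} {m c p q : ℕ}

theorem eq_of_eq_of_eq_not {α : Type*} {S T : Bool → α} (e : Bool) (he : S e = T e)
    (hne : S (!e) = T (!e)) : S = T := by
  funext b
  rcases eq_or_ne b e with rfl | hb
  · exact he
  · rwa [Bool.eq_not_of_ne hb]

theorem pop_self (e : Bool) (m : ℕ) (S : Bool → Set ℕ) :
    pop e m S e = {a ∈ S e | ¬IsLeast (S e) a} :=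
  if_pos rfl

theorem pop_of_ne {b : Bool} (hb : b ≠ e) (m : ℕ) (S : Bool → Set ℕ) :
    pop e m S b = {a ∈ S b | ¬IsGreatest (S b ∩ lowerBounds (S e)) a} ∪
      {a | a = m ∧ (S b ∩ lowerBounds (S e)).Nonempty} :=
  if_neg hb

theorem push_self (e : Bool) (c : ℕ) (S : Bool → Set ℕ) : push e c S e = insert c (S e) :=
  Function.update_self ..

theorem push_not (e : Bool) (c : ℕ) (S : Bool → Set ℕ) : push e c S (!e) = S (!e) :=
  Function.update_of_ne (Bool.not_ne_self e) ..

theorem isLeast_insert_iff {X : Set ℕ} (hc : ∀ x ∈ X, c < x) {x : ℕ} :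
    IsLeast (insert c X) x ↔ x = c := by
  have hleast : IsLeast (insert c X) c :=
    ⟨Set.mem_insert c X, by rintro y (rfl | hy); exacts [le_rfl, (hc y hy).le]⟩
  exact ⟨fun h => h.unique hleast, fun h => h ▸ hleast⟩

theorem insert_sep_not_isLeast {X : Set ℕ} (hc : ∀ x ∈ X, c < x) :
    {a ∈ insert c X | ¬IsLeast (insert c X) a} = X := by
  ext a
  have hne : a ∈ X → a ≠ c := fun ha => (hc a ha).ne'
  simp only [isLeast_insert_iff hc, Set.mem_ofPred_eq, Set.mem_insert_iff]
  tauto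

theorem pop_push_self (hc : ∀ b, ∀ x ∈ S b, c < x) (m : ℕ) : pop e m (push e c S) = S := by
  refine eq_of_eq_of_eq_not e ?_ ?_
  · rw [pop_self, push_self, insert_sep_not_isLeast (hc e)]
  · have hempty : S (!e) ∩ lowerBounds (insert c (S e)) = ∅ :=
      Set.eq_empty_of_forall_notMem fun y hy =>
        (hc _ y hy.1).not_ge (hy.2 (Set.mem_insert c _))
    rw [pop_of_ne (Bool.not_ne_self e), push_self, push_not, hempty]
    simp [IsGreatest]

theorem insert_sep_not_isGreatest {X Y : Set ℕ} (hX : ∀ x ∈ X, c < x) (hY : ∀ y ∈ Y, c < y) :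
    {a ∈ insert c X | ¬IsGreatest (insert c X ∩ lowerBounds Y) a} =
      {a ∈ X | ¬IsGreatest (X ∩ lowerBounds Y) a} ∪ {a | a = c ∧ (X ∩ lowerBounds Y).Nonempty} := by
  have hlow : insert c X ∩ lowerBounds Y = insert c (X ∩ lowerBounds Y) :=
    Set.insert_inter_of_mem fun y hy => (hY y hy).le
  rw [hlow]
  have hZ : ∀ z ∈ X ∩ lowerBounds Y, c < z := fun z hz => hX z hz.1
  generalize X ∩ lowerBounds Y = Z at hZ
  have hgreatest_c : IsGreatest (insert c Z) c ↔ ¬Z.Nonempty := by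
    refine ⟨fun h ⟨z, hz⟩ => (hZ z hz).not_ge (h.2 (Or.inr hz)), fun h => ?_⟩
    rw [Set.not_nonempty_iff_eq_empty.1 h, insert_empty_eq]
    exact isGreatest_singleton
  have hgreatest : ∀ x, c < x → (IsGreatest (insert c Z) x ↔ IsGreatest Z x) := by
    intro x hx
    simp only [IsGreatest, Set.mem_insert_iff, upperBounds_insert, hx.ne', false_or,
      Set.mem_inter_iff, Set.mem_Ici, hx.le, true_and]
  ext a
  simp only [Set.mem_ofPred_eq, Set.mem_insert_iff, Set.mem_union]
  rcases eq_or_ne a c with rfl | ha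
  · have ha : a ∉ X := fun h => lt_irrefl a (hX a h)
    simp [ha, hgreatest_c]
  · simp only [ha, false_or, false_and, or_false]
    exact and_congr_right fun h => not_congr (hgreatest a (hX a h))

theorem pop_not_push (hc : ∀ b, ∀ x ∈ S b, c < x) (m : ℕ) :
    pop (!e) m (push e c S) = push e m (pop (!e) c S) := by
  have hne : e ≠ !e := (Bool.not_ne_self e).symm
  refine eq_of_eq_of_eq_not e ?_ ?_
  · have hc_low : c ∈ insert c (S e) ∩ lowerBounds (S (!e)) :=
      ⟨Set.mem_insert c _, fun y hy => (hc _ y hy).le⟩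
    rw [push_self, pop_of_ne hne, pop_of_ne hne, push_self, push_not,
      insert_sep_not_isGreatest (hc e) (hc !e), ← Set.union_singleton (a := m)]
    simp [Set.nonempty_of_mem hc_low]
  · rw [push_not, pop_self, pop_self, push_not]

theorem pop_not_insert (hc : ∀ b, ∀ x ∈ S b, c < x) (m : ℕ) :
    pop (!e) m (fun b => insert c (S b)) = push e m S := by
  have hne : e ≠ !e := (Bool.not_ne_self e).symm
  refine eq_of_eq_of_eq_not e ?_ ?_
  · have hlow : insert c (S e) ∩ lowerBounds (insert c (S (!e))) = {c} := by
      ext y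
      rw [lowerBounds_insert]
      refine ⟨fun ⟨hy, hyc, _⟩ => hy.resolve_right fun h => (hc e y h).not_ge hyc, ?_⟩
      rintro rfl
      exact ⟨Set.mem_insert y _, le_refl y, fun z hz => (hc _ z hz).le⟩
    have hgreatest : ∀ x, IsGreatest {c} x ↔ x = c := fun x =>
      ⟨And.left, by rintro rfl; exact isGreatest_singleton⟩
    rw [push_self, pop_of_ne hne, hlow]
    ext x
    have hX : x ∈ S e → x ≠ c := fun hx => (hc e x hx).ne'
    simp only [hgreatest, Set.mem_ofPred_eq, Set.mem_insert_iff, Set.mem_union,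
      Set.singleton_nonempty, and_true]
    tauto
  · rw [push_not, pop_self, insert_sep_not_isLeast (hc !e)]

theorem lt_of_mem_pop (hmc : m < c) (hc : ∀ b, ∀ x ∈ S b, c < x) (e : Bool) :
    ∀ b, ∀ x ∈ pop e c S b, m < x := by
  intro b x hx
  rcases eq_or_ne b e with rfl | hb
  · rw [pop_self] at hx
    exact hmc.trans (hc b x hx.1)
  · rw [pop_of_ne hb] at hx
    rcases hx with hx | ⟨rfl, -⟩
    exacts [hmc.trans (hc b x hx.1), hmc]

theorem exits_succ_of_none (h : f m = none) (S : Bool → Set ℕ) :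
    exits f (m + 1) S = exits f m S := by
  rw [exits, h]

theorem exits_succ_of_some (h : f m = some e) (S : Bool → Set ℕ) :
    exits f (m + 1) S = {x | IsLeast (S e) x} ∪ exits f m (pop e m S) := by
  rw [exits, h]

theorem exits_congr (h : ∀ j < m, f j = g j) (S : Bool → Set ℕ) : exits f m S = exits g m S := by
  induction m generalizing S with
  | zero => rfl
  | succ m ih =>
    simp only [exits, h m (Nat.lt_succ_self m), ih fun j hj => h j (hj.trans (Nat.lt_succ_self m))]

theorem exits_of_forall_none (hpm : p ≤ m) (h : ∀ j, p ≤ j → j < m → f j = none)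
    (S : Bool → Set ℕ) : exits f m S = exits f p S := by
  induction m, hpm using Nat.le_induction with
  | base => rfl
  | succ m hm ih =>
    rw [exits_succ_of_none (h m hm m.lt_succ_self), ih fun j h₁ h₂ => h j h₁ (by omega)]

theorem exits_empty (f : ℕ → Option Bool) (m : ℕ) : exits f m (fun _ => ∅) = ∅ := by
  have hpop : ∀ e m, pop e m (fun _ => ∅) = fun _ => ∅ := by
    intro e m
    funext b
    simp [pop]
  induction m with
  | zero => rfl
  | succ m ih => cases hf : f m <;> simp [exits, hf, ih, hpop, IsLeast]

/-- `g` arises from `f` by deleting a pair of letters of different colours at `p < q`, where `q` is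
the next letter after `p` and no letter after `q` has the colour `e` of the letter at `p`. -/
structure CancelPair (f g : ℕ → Option Bool) (p q : ℕ) (e : Bool) : Prop where
  lt : p < q
  left : f p = some e
  right : f q = some (!e)
  between : ∀ j, p < j → j < q → f j = none
  after : ∀ j, q < j → f j ≠ some e
  left_deleted : g p = none
  right_deleted : g q = none
  eq_off : ∀ j, j ≠ p → j ≠ q → g j = f j

namespace CancelPair

theorem exits_push_right (h : CancelPair f g p q e) (hc : ∀ b, ∀ x ∈ S b, c < x) :
    exits f q (push e c S) = {c} ∪ exits g q S := by
  have hpq := h.lt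
  have hleast : {x | IsLeast (push e c S e) x} = {c} := by
    ext x
    rw [push_self]
    exact isLeast_insert_iff (hc e)
  rw [exits_of_forall_none hpq (fun j h₁ h₂ => h.between j h₁ h₂), exits_succ_of_some h.left,
    hleast, pop_push_self hc,
    exits_of_forall_none (f := g) hpq fun j h₁ h₂ => by
      rw [h.eq_off j (by omega) (by omega)]; exact h.between j h₁ h₂,
    exits_succ_of_none h.left_deleted,
    exits_congr fun j (hj : j < p) => (h.eq_off j (by omega) (by omega)).symm]

theorem eq_none_or_eq_some_not (h : CancelPair f g p q e) (hm : q < m) :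
    f m = none ∨ f m = some (!e) := by
  have hne := h.after m hm
  cases hf : f m with
  | none => exact Or.inl rfl
  | some b => exact Or.inr (congrArg some (Bool.eq_not_of_ne fun hb => hne (hf.trans (hb ▸ rfl))))

theorem exits_push (h : CancelPair f g p q e) (hqm : q < m) (hmc : m ≤ c)
    (hc : ∀ b, ∀ x ∈ S b, c < x) :
    exits f m (push e c S) =
      {q} ∪ ({x | IsLeast (S (!e)) x} ∪ exits g m (pop (!e) c S)) := by
  induction m, hqm using Nat.le_induction generalizing S c with
  | base =>
    rw [exits_succ_of_some h.right, push_not, pop_not_push hc,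
      exits_succ_of_none h.right_deleted, h.exits_push_right (lt_of_mem_pop hmc hc _),
      Set.union_left_comm]
  | succ m hqm ih =>
    have hg : g m = f m := h.eq_off m (by have := h.lt; omega) (by omega)
    rcases h.eq_none_or_eq_some_not hqm with hf | hf
    · rw [exits_succ_of_none hf, exits_succ_of_none (hg.trans hf), ih (by omega) hc]
    · rw [exits_succ_of_some hf, exits_succ_of_some (hg.trans hf), push_not, pop_not_push hc,
        ih le_rfl (lt_of_mem_pop hmc hc _), Set.union_left_comm]

theorem exits_insert (h : CancelPair f g p q e) (hqm : q < m) (hmc : m ≤ c)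
    (hc : ∀ b, ∀ x ∈ S b, c < x) :
    exits f m (fun b => insert c (S b)) = {c} ∪ ({q} ∪ exits g m S) := by
  have hleast : ∀ b, {x | IsLeast (insert c (S b)) x} = {c} := fun b =>
    Set.ext fun x => isLeast_insert_iff (hc b)
  have hlt : ∀ k < c, ∀ b, ∀ x ∈ S b, k < x := fun k hk b x hx => hk.trans (hc b x hx)
  induction m, hqm using Nat.le_induction with
  | base =>
    rw [exits_succ_of_some h.right, hleast, pop_not_insert hc,
      exits_succ_of_none h.right_deleted, h.exits_push_right (hlt q hmc)]
  | succ m hqm ih =>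
    have hg : g m = f m := h.eq_off m (by have := h.lt; omega) (by omega)
    rcases h.eq_none_or_eq_some_not hqm with hf | hf
    · rw [exits_succ_of_none hf, exits_succ_of_none (hg.trans hf), ih (by omega)]
    · rw [exits_succ_of_some hf, exits_succ_of_some (hg.trans hf), hleast, pop_not_insert hc,
        h.exits_push hqm le_rfl (hlt m hmc)]

end CancelPair

end Exits

/-! ### Heights and strict minima -/

section Paths

/-- The path `h` stays strictly above its value at `p` after `p`, up to time `N`. -/
def IsStrictMinAfter (h : ℕ → ℤ) (N p : ℕ) : Prop :=
  ∀ k, p < k → k ≤ N → h p < h k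

/-- The path `h` stays strictly above its value at `p` before `p`, from time `N` on. -/
def IsStrictMinBefore (h : ℕ → ℤ) (N p : ℕ) : Prop :=
  ∀ k, N ≤ k → k < p → h p < h k

variable {h h' : ℕ → ℤ} {N M c i p q : ℕ}

theorem exists_le_of_forall_not_isStrictMinAfter (hic : i ≤ c)
    (hno : ∀ a, i ≤ a → a ≤ c → ¬IsStrictMinAfter h N a) : ∃ k, c < k ∧ k ≤ N ∧ h k ≤ h i := by
  induction hd : c - i using Nat.strong_induction_on generalizing i with
  | _ d ih =>
    have hi := hno i le_rfl hic
    simp only [IsStrictMinAfter, not_forall, not_lt] at hi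
    obtain ⟨k, hik, hkN, hk⟩ := hi
    rcases lt_or_ge c k with hck | hkc
    · exact ⟨k, hck, hkN, hk⟩
    · obtain ⟨l, hcl, hlN, hl⟩ :=
        ih (c - k) (by omega) hkc (fun a ha => hno a (hik.le.trans ha)) rfl
      exact ⟨l, hcl, hlN, hl.trans hk⟩

theorem exists_le_of_forall_not_isStrictMinBefore (hci : c < i)
    (hno : ∀ a, c < a → a ≤ i → ¬IsStrictMinBefore h N a) : ∃ k, N ≤ k ∧ k ≤ c ∧ h k ≤ h i := by
  induction i using Nat.strong_induction_on with
  | _ i ih =>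
    have hi := hno i hci le_rfl
    simp only [IsStrictMinBefore, not_forall, not_lt] at hi
    obtain ⟨k, hNk, hki, hk⟩ := hi
    rcases lt_or_ge c k with hck | hkc
    · obtain ⟨l, hNl, hlc, hl⟩ := ih k hki hck fun a ha hak => hno a ha (hak.trans hki.le)
      exact ⟨l, hNl, hlc, hl.trans hk⟩
    · exact ⟨k, hNk, hkc, hk⟩

theorem isStrictMinAfter_raise_iff (hpc : p ≤ c) (hcN : c < N)
    (hstep : ∀ k, p ≤ k → k < N → h (k + 1) ≤ h k + 1)
    (hraise : ∀ k, p ≤ k → k ≤ c → h' k = h k + 1) (heq : ∀ k, c < k → k ≤ N → h' k = h k) :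
    IsStrictMinAfter h' N p ↔
      IsStrictMinAfter h N p ∧ ∃ a, p < a ∧ a ≤ c ∧ IsStrictMinAfter h N a := by
  have hp' := hraise p le_rfl hpc
  constructor
  · intro hmin
    refine ⟨fun k hpk hkN => ?_, ?_⟩
    · have := hmin k hpk hkN
      rcases lt_or_ge c k with hck | hkc
      · have := heq k hck hkN; omega
      · have := hraise k hpk.le hkc; omega
    · by_contra! hno
      obtain ⟨k, hck, hkN, hk⟩ : ∃ k, c < k ∧ k ≤ N ∧ h k ≤ h (p + 1) := by
        rcases hpc.eq_or_lt with rfl | hpc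
        · exact ⟨p + 1, p.lt_succ_self, hcN, le_rfl⟩
        · exact exists_le_of_forall_not_isStrictMinAfter hpc hno
      have hmin_k := hmin k (by omega) hkN
      have hstep_p := hstep p le_rfl (by omega)
      have heq_k := heq k hck hkN
      omega
  · rintro ⟨hmin, a, hpa, hac, ha⟩ k hpk hkN
    have hmin_k := hmin k hpk hkN
    rcases lt_or_ge c k with hck | hkc
    · have := heq k hck hkN
      have := hmin a hpa (by omega)
      have := ha k (by omega) hkN
      omega
    · have := hraise k hpk.le hkc; omega

theorem isStrictMinBefore_lower_iff (hNc : N ≤ c) (hqM : q ≤ M) (hiM : i ≤ M)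
    (hq : IsLeast {a | c < a ∧ IsStrictMinBefore h N a} q)
    (hstep : ∀ k, N ≤ k → k < M → h k ≤ h (k + 1) + 1)
    (hlower : ∀ k, N ≤ k → k ≤ c → h' k = h k - 1) (heq : ∀ k, c < k → k ≤ M → h' k = h k) :
    IsStrictMinBefore h' N i ↔ IsStrictMinBefore h N i ∧ i ≠ q := by
  obtain ⟨⟨hcq, hq_min⟩, hq_le⟩ := hq
  rcases lt_or_ge c i with hci | hic
  · have hi' := heq i hci hiM
    constructor
    · intro hmin
      refine ⟨fun k hNk hki => ?_, ?_⟩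
      · have := hmin k hNk hki
        rcases lt_or_ge c k with hck | hkc
        · have := heq k hck (by omega); omega
        · have := hlower k hNk hkc; omega
      · rintro rfl
        obtain ⟨k, hNk, hkc, hk⟩ : ∃ k, N ≤ k ∧ k ≤ c ∧ h k ≤ h (i - 1) := by
          rcases (Nat.le_sub_one_of_lt hci).eq_or_lt with hc | hc
          · exact ⟨i - 1, by omega, hc.ge, le_rfl⟩
          · refine exists_le_of_forall_not_isStrictMinBefore hc fun a ha hai hmin_a => ?_
            have := hq_le ⟨ha, hmin_a⟩
            omega
        have hmin_k := hmin k hNk (by omega)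
        have hstep_i := hstep (i - 1) (by omega) (by omega)
        rw [Nat.sub_add_cancel (by omega)] at hstep_i
        have hlower_k := hlower k hNk hkc
        omega
    · rintro ⟨hmin, hiq⟩ k hNk hki
      have hqi : q < i := (hq_le ⟨hci, hmin⟩).lt_of_ne' hiq
      have hmin_k := hmin k hNk hki
      rcases lt_or_ge c k with hck | hkc
      · have := heq k hck (by omega); omega
      · have := hlower k hNk hkc
        have := hmin q (by omega) hqi
        have := hq_min k hNk (by omega)
        omega
  · rw [and_iff_left (by omega)]
    refine forall_congr' fun k => forall_congr' fun hNk => forall_congr' fun hki => ?_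
    rw [hlower i (by omega) hic, hlower k hNk (by omega)]
    omega

end Paths

/-- The height in colour `b` reached at column `p` by the letters `u` read from column `t` on. -/
def height (u : ℕ → Option Bool) (t : ℕ) (b : Bool) (p : ℕ) : ℤ :=
  ∑ k ∈ Finset.Ico t p, rise b (u k)

theorem height_self (u : ℕ → Option Bool) (t : ℕ) (b : Bool) : height u t b t = 0 := by
  simp [height]

theorem height_succ (u : ℕ → Option Bool) {t p : ℕ} (htp : t ≤ p) (b : Bool) :
    height u t b (p + 1) = height u t b p + rise b (u p) :=
  Finset.sum_Ico_succ_top htp _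

theorem rise_self (b : Bool) : rise b (some b) = -1 := if_pos rfl

theorem rise_of_ne {b c : Bool} (h : b ≠ c) : rise b (some c) = 0 := if_neg h.symm

theorem rise_le_one (b : Bool) (l : Option Bool) : rise b l ≤ 1 := by
  rcases l with _ | c
  · exact le_rfl
  · simp only [rise]; split_ifs <;> decide

theorem neg_one_le_rise (b : Bool) (l : Option Bool) : -1 ≤ rise b l := by
  rcases l with _ | c
  · simp [rise]
  · simp only [rise]; split_ifs <;> decide

theorem eq_some_of_rise_neg {b : Bool} {l : Option Bool} (h : rise b l < 0) : l = some b := by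
  rcases l with _ | c
  · simp [rise] at h
  · by_contra hc
    rw [rise_of_ne fun hb => hc (congrArg some hb.symm)] at h
    exact h.false

theorem height_succ_le (u : ℕ → Option Bool) {t p : ℕ} (htp : t ≤ p) (b : Bool) :
    height u t b (p + 1) ≤ height u t b p + 1 := by
  have := rise_le_one b (u p)
  rw [height_succ _ htp]
  omega

theorem height_le_succ (u : ℕ → Option Bool) {t p : ℕ} (htp : t ≤ p) (b : Bool) :
    height u t b p ≤ height u t b (p + 1) + 1 := by
  have := neg_one_le_rise b (u p)
  rw [height_succ _ htp]
  omega

theorem eq_none_of_height_nonneg {u : ℕ → Option Bool} {t : ℕ}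
    (h : ∀ b, 0 ≤ height u t b (t + 1)) : u t = none := by
  simp only [height_succ u le_rfl, height_self, zero_add] at h
  cases hu : u t with
  | none => rfl
  | some b => exact absurd (h b) (by rw [hu, rise_self]; decide)

theorem height_promotion_of_le {u v : ℕ → Option Bool} {t p r : ℕ} (hu : u t = none)
    (hv : ∀ k, t < k → k < r → v k = u k) (b : Bool) (htp : t < p) (hpr : p ≤ r) :
    height v (t + 1) b p = height u t b p - 1 := by
  induction p, htp using Nat.le_induction with
  | base =>
    rw [height_self, height_succ _ le_rfl, hu, height_self]
    simp [rise]
  | succ p htp ih =>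
    rw [height_succ _ htp, height_succ _ (by omega), ih (by omega), hv p htp hpr]
    ring

theorem height_promotion_of_lt {u v : ℕ → Option Bool} {t p r M : ℕ} {e : Bool} (htr : t < r)
    (hu : u t = none) (hur : u r = some e) (hvr : v r = none)
    (hv : ∀ k, t < k → k < M → k ≠ r → v k = u k) (b : Bool) (hrp : r < p) (hpM : p ≤ M) :
    height v (t + 1) b p = height u t b p + if b = e then 1 else 0 := by
  induction p, hrp using Nat.le_induction with
  | base =>
    rw [height_succ _ htr, height_succ _ htr.le, hvr, hur,
      height_promotion_of_le hu (fun k hk hkr => hv k hk (by omega) hkr.ne) b htr le_rfl]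
    rcases eq_or_ne b e with rfl | hb
    · simp [rise]
    · simp [rise, hb, hb.symm]
  | succ p hrp ih =>
    rw [height_succ _ (by omega), height_succ _ (by omega), ih (by omega),
      hv p (by omega) hpM (by omega)]
    ring

theorem height_shift (u : ℕ → Option Bool) (t : ℕ) (b : Bool) (p : ℕ) :
    height (fun k => u (k - t)) t b p = height u 0 b (p - t) := by
  simp [height, Finset.sum_Ico_eq_sum_range]

/-! ### Promotion diagrams -/

/-- A word of length `N` and its successive promotions, written below each other with one shift to
the right per promotion: row `t` occupies the columns `t, …, t + N - 1`, its first return to height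
zero in some colour is in column `s t`, and that colour is `e t`. -/
structure PromotionDiagram (N : ℕ) (U : ℕ → ℕ → Option Bool) (s : ℕ → ℕ) (e : ℕ → Bool) :
    Prop where
  lt_hit : ∀ t, t < s t
  hit_lt : ∀ t, s t < t + N
  letter_hit : ∀ t, U t (s t) = some (e t)
  letter_last : ∀ t, U (t + 1) (t + N) = some (e t)
  letter_succ_hit : ∀ t, U (t + 1) (s t) = none
  letter_succ : ∀ t p, t < p → p < t + N → p ≠ s t → U (t + 1) p = U t p
  height_last : ∀ t b, height (U t) t b (t + N) = 0
  height_nonneg : ∀ t b p, t ≤ p → p ≤ t + N → 0 ≤ height (U t) t b p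
  height_pos : ∀ t b p, t < p → p ≤ s t → 0 < height (U t) t b p
  height_hit_succ : ∀ t, height (U t) t (e t) (s t + 1) = 0

namespace PromotionDiagram

variable {N : ℕ} {U : ℕ → ℕ → Option Bool} {s : ℕ → ℕ} {e : ℕ → Bool} {t t' p q j : ℕ} {b : Bool}

theorem letter_first (D : PromotionDiagram N U s e) (t : ℕ) : U t t = none :=
  eq_none_of_height_nonneg fun b => (D.height_pos t b (t + 1) t.lt_succ_self (D.lt_hit t)).le

theorem height_succ_row_of_le_hit (D : PromotionDiagram N U s e) (b : Bool) (htp : t < p)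
    (hp : p ≤ s t) : height (U (t + 1)) (t + 1) b p = height (U t) t b p - 1 := by
  have hN := D.hit_lt t
  exact height_promotion_of_le (D.letter_first t)
    (fun k hk hks => D.letter_succ t k hk (by omega) hks.ne) b htp hp

theorem height_hit (D : PromotionDiagram N U s e) (t : ℕ) : height (U t) t (e t) (s t) = 1 := by
  have h := D.height_hit_succ t
  rw [height_succ _ (D.lt_hit t).le, D.letter_hit, rise_self] at h
  omega

theorem height_succ_row_of_hit_lt (D : PromotionDiagram N U s e) (b : Bool) (hp : s t < p)
    (hpN : p ≤ t + N) :
    height (U (t + 1)) (t + 1) b p = height (U t) t b p + if b = e t then 1 else 0 :=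
  height_promotion_of_lt (D.lt_hit t) (D.letter_first t) (D.letter_hit t) (D.letter_succ_hit t)
    (D.letter_succ t) b hp hpN

theorem height_succ_row_self (D : PromotionDiagram N U s e) (hp : s t < p) (hpN : p ≤ t + N) :
    height (U (t + 1)) (t + 1) (e t) p = height (U t) t (e t) p + 1 := by
  rw [D.height_succ_row_of_hit_lt _ hp hpN, if_pos rfl]

theorem height_succ_row_of_ne (D : PromotionDiagram N U s e) (hb : b ≠ e t) (hp : s t < p)
    (hpN : p ≤ t + N) : height (U (t + 1)) (t + 1) b p = height (U t) t b p := by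
  rw [D.height_succ_row_of_hit_lt _ hp hpN, if_neg hb, add_zero]

theorem letter_eq_none_of_le (D : PromotionDiagram N U s e) (htt : t ≤ t') (hp : t' ≤ p)
    (hpN : p < t + N) (hU : U t p = none) : U t' p = none := by
  induction t', htt using Nat.le_induction with
  | base => exact hU
  | succ t' htt ih =>
    rcases eq_or_ne p (s t') with rfl | hps
    · exact D.letter_succ_hit t'
    · rw [D.letter_succ t' p hp (by omega) hps, ih (by omega)]

theorem exists_hit_of_letter_ne (D : PromotionDiagram N U s e) (htt : t ≤ t') (hp : t' ≤ p)
    (hpN : p < t + N) (hU : U t' p ≠ U t p) : ∃ i, t ≤ i ∧ i < t' ∧ s i = p := by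
  by_contra! hno
  refine hU ?_
  clear hU
  induction t', htt using Nat.le_induction with
  | base => rfl
  | succ t' htt ih =>
    rw [D.letter_succ t' p hp (by omega) (hno t' htt t'.lt_succ_self).symm,
      ih (by omega) fun i hi hit => hno i hi (hit.trans t'.lt_succ_self)]

/-- Rows `t` and `j + 1` have the same letters in the columns `p` concerned: a hit there in between
would leave a height of zero, which cannot exceed the height of row `j + 1`. -/
theorem height_lt_height_of_A (D : PromotionDiagram N U s e) (hA : U 0 j = none) (hs : N ≤ s j)
    (hjp : j + 1 ≤ p) (hpN : p ≤ N) :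
    ∀ t ≤ j, ∀ b, height (U (j + 1)) (j + 1) b p < height (U t) t b p := by
  induction p, hjp using Nat.le_induction with
  | base =>
    intro t htj b
    have hUt : U t j = none := D.letter_eq_none_of_le t.zero_le htj (by omega) hA
    have hnonneg := D.height_nonneg t b j htj (by omega)
    rw [height_self, height_succ _ htj, hUt]
    simp only [rise]
    omega
  | succ m hjm ih =>
    intro t htj b
    have ih := ih (by omega)
    have hU : U (j + 1) m = U t m := by
      by_contra hne
      obtain ⟨i, -, hij, him⟩ := D.exists_hit_of_letter_ne (by omega) hjm (by omega) hne
      have hij : i ≠ j := by rintro rfl; omega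
      have hzero := D.height_succ_row_of_le_hit (e i) (D.lt_hit i) le_rfl
      rw [D.height_hit, him] at hzero
      have hlt := ih (i + 1) (by omega) (e i)
      have hnonneg := D.height_nonneg (j + 1) (e i) m hjm (by omega)
      omega
    rw [height_succ _ hjm, height_succ _ (by omega), hU]
    have := ih t htj b
    omega

theorem hit_lt_of_A (D : PromotionDiagram N U s e) (hj : j < N) (hA : U 0 j = none) :
    s j < N := by
  by_contra! hs
  have hlt := D.height_lt_height_of_A hA hs hj le_rfl 0 j.zero_le true
  have hlast := D.height_last 0 true
  have hnonneg := D.height_nonneg (j + 1) true N hj (by omega)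
  rw [zero_add] at hlast
  omega

/-- The columns left of `N` whose `A` in row `t` is matched in colour `b` by no letter left of
column `N`. -/
def leftSet (N : ℕ) (U : ℕ → ℕ → Option Bool) (t : ℕ) (b : Bool) : Set ℕ :=
  {p | t ≤ p ∧ p < N ∧ IsStrictMinAfter (height (U t) t b) N p}

/-- The `j` such that in row `t` the letter in column `j + N` has colour `b` and matches no `A`
between column `N` and itself. -/
def rightSet (N : ℕ) (U : ℕ → ℕ → Option Bool) (t : ℕ) (b : Bool) : Set ℕ :=
  {j | j < t ∧ IsStrictMinBefore (height (U t) t b) N (j + N + 1)}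

open Classical in
/-- The letter in column `j + N` of row `t` if it matches no `A` from column `N` on, and `none`
otherwise. -/
noncomputable def rightColor (N : ℕ) (U : ℕ → ℕ → Option Bool) (t j : ℕ) : Option Bool :=
  (U t (j + N)).filter fun b => j ∈ rightSet N U t b

theorem rightColor_eq_some_iff (ht : t ≤ N) :
    rightColor N U t j = some b ↔ j ∈ rightSet N U t b := by
  simp only [rightColor, Option.filter_eq_some_iff, decide_eq_true_eq, and_iff_right_iff_imp]
  rintro ⟨-, hmin⟩
  have hlt := hmin (j + N) (by omega) (by omega)
  rw [height_succ _ (by omega)] at hlt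
  exact eq_some_of_rise_neg (by omega)

theorem rightColor_congr {i j : ℕ} (ht : t ≤ N) (ht' : t' ≤ N)
    (h : ∀ b, i ∈ rightSet N U t b ↔ j ∈ rightSet N U t' b) :
    rightColor N U t i = rightColor N U t' j :=
  Option.ext fun b => by simp only [rightColor_eq_some_iff ht, rightColor_eq_some_iff ht', h]

theorem rightColor_eq_none (h : ∀ b, j ∉ rightSet N U t b) : rightColor N U t j = none := by
  simp only [rightColor, Option.filter_eq_none_iff, decide_eq_true_eq]
  exact fun b _ => h b

theorem leftSet_of_le_hit (D : PromotionDiagram N U s e) (ht : t < N) (hs : N ≤ s t) :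
    leftSet N U t = fun b => insert t (leftSet N U (t + 1) b) := by
  have hmin_iff : ∀ b p, t < p → (IsStrictMinAfter (height (U (t + 1)) (t + 1) b) N p ↔
      IsStrictMinAfter (height (U t) t b) N p) := by
    intro b p htp
    refine forall_congr' fun k => forall_congr' fun hpk => forall_congr' fun hkN => ?_
    rw [D.height_succ_row_of_le_hit b htp (by omega),
      D.height_succ_row_of_le_hit b (htp.trans hpk) (by omega)]
    omega
  funext b
  ext p
  constructor
  · rintro ⟨htp, hpN, hmin⟩
    rcases htp.eq_or_lt with rfl | htp
    · exact Or.inl rfl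
    · exact Or.inr ⟨htp, hpN, (hmin_iff b p htp).2 hmin⟩
  · rintro (rfl | ⟨htp, hpN, hmin⟩)
    · refine ⟨le_rfl, ht, fun k hpk hkN => ?_⟩
      rw [height_self]
      exact D.height_pos p b k hpk (by omega)
    · exact ⟨by omega, hpN, (hmin_iff b p htp).1 hmin⟩

theorem isLeast_leftSet (D : PromotionDiagram N U s e) (hs : s t < N) :
    IsLeast (leftSet N U (t + 1) (e t)) (s t) := by
  have hlt := D.lt_hit t
  have hzero : height (U (t + 1)) (t + 1) (e t) (s t) = 0 := by
    rw [D.height_succ_row_of_le_hit _ hlt le_rfl, D.height_hit, sub_self]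
  refine ⟨⟨hlt, hs, fun k hk hkN => ?_⟩, ?_⟩
  · have hnonneg := D.height_nonneg t (e t) k (by omega) (by omega)
    rw [hzero, D.height_succ_row_self hk (by omega)]
    omega
  · rintro p ⟨htp, -, hmin⟩
    by_contra! hps
    have hnonneg := D.height_nonneg (t + 1) (e t) p htp (by omega)
    have := hmin (s t) hps hs.le
    omega

theorem mem_leftSet_self_iff (D : PromotionDiagram N U s e) (hs : s t < N) :
    p ∈ leftSet N U t (e t) ↔ p ∈ leftSet N U (t + 1) (e t) ∧ p ≠ s t := by
  have hlt := D.lt_hit t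
  have hmin_iff : s t < p → (IsStrictMinAfter (height (U (t + 1)) (t + 1) (e t)) N p ↔
      IsStrictMinAfter (height (U t) t (e t)) N p) := by
    refine fun hp => forall_congr' fun k => forall_congr' fun hpk => forall_congr' fun hkN => ?_
    rw [D.height_succ_row_self hp (by omega), D.height_succ_row_self (by omega) (by omega)]
    omega
  constructor
  · rintro ⟨htp, hpN, hmin⟩
    have hps : s t < p := by
      by_contra! hps
      have hzero := hmin (s t + 1) (by omega) (by omega)
      rw [D.height_hit_succ] at hzero
      have hnonneg := D.height_nonneg t (e t) p htp (by omega)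
      omega
    exact ⟨⟨by omega, hpN, (hmin_iff hps).2 hmin⟩, hps.ne'⟩
  · rintro ⟨hp, hps⟩
    have hps : s t < p := ((D.isLeast_leftSet hs).2 hp).lt_of_ne' hps
    exact ⟨by omega, hp.2.1, (hmin_iff hps).1 hp.2.2⟩


theorem mem_leftSet_iff_of_lt_hit (D : PromotionDiagram N U s e) (hb : b ≠ e t) (htp : t < p)
    (hps : p ≤ s t) (hs : s t < N) :
    p ∈ leftSet N U t b ↔
      p ∈ leftSet N U (t + 1) b ∧ ∃ a ∈ leftSet N U (t + 1) b, p < a ∧ a ≤ s t := by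
  have hiff := isStrictMinAfter_raise_iff (h := height (U (t + 1)) (t + 1) b)
    (h' := height (U t) t b) hps hs (fun k hk _ => height_succ_le _ (by omega) b)
    (fun k hpk hks => by rw [D.height_succ_row_of_le_hit b (by omega) hks, sub_add_cancel])
    (fun k hsk hkN => (D.height_succ_row_of_ne hb hsk (by omega)).symm)
  constructor
  · rintro ⟨-, hpN, hmin⟩
    obtain ⟨hmin, a, hpa, has, ha⟩ := hiff.1 hmin
    exact ⟨⟨htp, hpN, hmin⟩, a, ⟨by omega, by omega, ha⟩, hpa, has⟩
  · rintro ⟨⟨-, hpN, hmin⟩, a, ⟨-, -, ha⟩, hpa, has⟩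
    exact ⟨htp.le, hpN, hiff.2 ⟨hmin, a, hpa, has, ha⟩⟩

theorem mem_leftSet_iff_of_hit_lt (D : PromotionDiagram N U s e) (hb : b ≠ e t) (hps : s t < p) :
    p ∈ leftSet N U t b ↔ p ∈ leftSet N U (t + 1) b := by
  have hlt := D.lt_hit t
  have htp : t ≤ p ↔ t + 1 ≤ p := by omega
  refine and_congr htp (and_congr_right fun hpN => forall_congr' fun k =>
    forall_congr' fun hpk => forall_congr' fun hkN => ?_)
  rw [D.height_succ_row_of_ne hb hps (by omega),
    D.height_succ_row_of_ne hb (hps.trans hpk) (by omega)]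

theorem self_mem_leftSet_iff (D : PromotionDiagram N U s e) (hb : b ≠ e t) (hs : s t < N) :
    t ∈ leftSet N U t b ↔ ∃ a ∈ leftSet N U (t + 1) b, a ≤ s t := by
  have hlt := D.lt_hit t
  constructor
  · rintro ⟨-, -, hmin⟩
    by_contra! hno
    obtain ⟨k, hsk, hkN, hk⟩ := exists_le_of_forall_not_isStrictMinAfter hlt
      fun a hta has ha => (hno a ⟨hta, has.trans_lt hs, ha⟩).not_ge has
    have hpos := hmin k (by omega) hkN
    rw [height_self] at hpos hk
    rw [D.height_succ_row_of_ne hb hsk (by omega)] at hk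
    omega
  · rintro ⟨a, ⟨hta, haN, ha⟩, has⟩
    refine ⟨le_rfl, by omega, fun k htk hkN => ?_⟩
    rw [height_self]
    rcases lt_or_ge (s t) k with hsk | hks
    · have hlt_k := ha k (by omega) hkN
      have hnonneg := D.height_nonneg (t + 1) b a hta (by omega)
      rw [D.height_succ_row_of_ne hb hsk (by omega)] at hlt_k
      omega
    · exact D.height_pos t b k htk hks

theorem mem_leftSet_inter_lowerBounds_iff (D : PromotionDiagram N U s e) (hs : s t < N) :
    p ∈ leftSet N U (t + 1) b ∩ lowerBounds (leftSet N U (t + 1) (e t)) ↔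
      p ∈ leftSet N U (t + 1) b ∧ p ≤ s t :=
  and_congr_right fun _ => le_isGLB_iff (D.isLeast_leftSet hs).isGLB |>.symm

theorem leftSet_eq_pop (D : PromotionDiagram N U s e) (hs : s t < N) :
    leftSet N U t = pop (e t) t (leftSet N U (t + 1)) := by
  funext b
  ext p
  rcases eq_or_ne b (e t) with rfl | hb
  · rw [D.mem_leftSet_self_iff hs, pop_self]
    have hleast := D.isLeast_leftSet hs
    exact and_congr_right fun _ => not_congr ⟨fun h => h ▸ hleast, fun h => h.unique hleast⟩
  rw [pop_of_ne hb]
  simp only [Set.mem_union, Set.mem_ofPred_eq, IsGreatest, upperBounds, Set.Nonempty,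
    D.mem_leftSet_inter_lowerBounds_iff hs]
  rcases lt_trichotomy p t with hpt | rfl | htp
  · have hrow : ∀ t', p < t' → p ∉ leftSet N U t' b := fun t' h hp => h.not_ge hp.1
    simp [hrow t hpt, hrow (t + 1) (by omega), hpt.ne]
  · have hrow : p ∉ leftSet N U (p + 1) b := fun hp => p.lt_irrefl hp.1
    simp [hrow, D.self_mem_leftSet_iff hb hs]
  · rcases le_or_gt p (s t) with hps | hps
    · rw [D.mem_leftSet_iff_of_lt_hit hb htp hps hs, or_iff_left (by simp [htp.ne'])]
      refine and_congr_right fun hp => ?_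
      simp only [hp, hps, true_and, and_imp]
      push Not
      exact exists_congr fun a => by tauto
    · rw [D.mem_leftSet_iff_of_hit_lt hb hps]
      simp [hps.not_ge, htp.ne']

theorem rightColor_succ_of_hit_lt (D : PromotionDiagram N U s e) (ht : t < N) (hs : s t < N) :
    rightColor N U (t + 1) = Function.update (rightColor N U t) t (some (e t)) := by
  funext j
  rcases eq_or_ne j t with rfl | hj
  · rw [Function.update_self, rightColor_eq_some_iff ht]
    refine ⟨j.lt_succ_self, fun k hNk hkj => ?_⟩
    have hnonneg := D.height_nonneg j (e j) k (by omega) (by omega)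
    rw [Nat.add_right_comm, D.height_last, D.height_succ_row_self (by omega) (by omega)]
    omega
  · rw [Function.update_of_ne hj]
    refine rightColor_congr ht ht.le fun b => ?_
    have hjt : j < t + 1 ↔ j < t := by omega
    refine and_congr_right_iff.2 ?_ |>.trans (and_congr_left' hjt)
    refine fun hjt => forall_congr' fun k => forall_congr' fun hNk => forall_congr' fun hkj => ?_
    rw [D.height_succ_row_of_hit_lt b (by omega) (by omega),
      D.height_succ_row_of_hit_lt b (by omega) (by omega)]
    omega

theorem mem_rightSet_hit (D : PromotionDiagram N U s e) (hs : s t = p + N) (htN : t < N) :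
    p ∈ rightSet N U t (e t) := by
  have hN := D.hit_lt t
  refine ⟨by omega, fun k hNk hkp => ?_⟩
  rw [← hs, D.height_hit_succ]
  exact D.height_pos t (e t) k (by omega) (by omega)

theorem notMem_rightSet_of_hit_lt (D : PromotionDiagram N U s e) (hs : s t = p + N)
    (htN : t < N) (hpj : p < j) : j ∉ rightSet N U t (e t) := by
  rintro ⟨hjt, hmin⟩
  have hneg := hmin (s t + 1) (by omega) (by omega)
  have hnonneg := D.height_nonneg t (e t) (j + N + 1) (by omega) (by omega)
  rw [D.height_hit_succ] at hneg
  omega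

theorem notMem_rightSet_succ (D : PromotionDiagram N U s e) (hs : N ≤ s t) (b : Bool) :
    t ∉ rightSet N U (t + 1) b := by
  have hlt := D.lt_hit t
  have hN := D.hit_lt t
  rintro ⟨-, hmin⟩
  rw [IsStrictMinBefore, Nat.add_right_comm, D.height_last] at hmin
  rcases eq_or_ne b (e t) with rfl | hb
  · have hpos := hmin (s t) hs (by omega)
    rw [D.height_succ_row_of_le_hit _ hlt le_rfl, D.height_hit] at hpos
    omega
  · have hpos := hmin (t + N) (by omega) (by omega)
    rw [D.height_succ_row_of_ne hb hN le_rfl, D.height_last] at hpos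
    omega

theorem mem_rightSet_succ_self_iff (D : PromotionDiagram N U s e) (hs : s t = p + N)
    (htN : t < N) :
    j ∈ rightSet N U (t + 1) (e t) ↔ j ∈ rightSet N U t (e t) ∧ j ≠ p := by
  have hlt := D.lt_hit t
  have hN := D.hit_lt t
  rcases lt_or_ge j p with hjp | hpj
  · rw [and_iff_left hjp.ne]
    refine and_congr (by omega) ?_
    refine forall_congr' fun k => forall_congr' fun hNk => forall_congr' fun hkj => ?_
    rw [D.height_succ_row_of_le_hit _ (by omega) (by omega),
      D.height_succ_row_of_le_hit _ (by omega) (by omega)]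
    omega
  · refine iff_of_false ?_ ?_
    · rintro ⟨hjt, hmin⟩
      have hneg := hmin (s t) (by omega) (by omega)
      have hnonneg := D.height_nonneg (t + 1) (e t) (j + N + 1) (by omega) (by omega)
      rw [D.height_succ_row_of_le_hit _ hlt le_rfl, D.height_hit] at hneg
      omega
    · rintro ⟨hj, hjp⟩
      exact D.notMem_rightSet_of_hit_lt hs htN (hpj.lt_of_ne' hjp) hj

theorem exists_isLeast_isStrictMinBefore (D : PromotionDiagram N U s e) (hb : b ≠ e t)
    (hs : s t = p + N) (htN : t < N) :
    ∃ q, p < q ∧ q < t ∧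
      IsLeast {a | s t < a ∧ IsStrictMinBefore (height (U t) t b) N a} (q + N + 1) := by
  have hN := D.hit_lt t
  obtain ⟨a, hsa, haN, ha⟩ :
      ∃ a, s t < a ∧ a ≤ t + N ∧ IsStrictMinBefore (height (U t) t b) N a := by
    by_contra! hno
    obtain ⟨k, hNk, hks, hk⟩ := exists_le_of_forall_not_isStrictMinBefore hN hno
    have hpos := D.height_pos t b k (by omega) hks
    rw [D.height_last] at hk
    omega
  have hleast := isLeast_csInf (s := {a | s t < a ∧ IsStrictMinBefore (height (U t) t b) N a})
    ⟨a, hsa, ha⟩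
  have hle := hleast.2 ⟨hsa, ha⟩
  obtain ⟨hs_lt, hmin⟩ := hleast.1
  generalize sInf {a | s t < a ∧ IsStrictMinBefore (height (U t) t b) N a} = l at *
  have hne : l ≠ s t + 1 := by
    rintro rfl
    have hlt := hmin (s t) (by omega) (by omega)
    rw [height_succ _ (by omega), D.letter_hit, rise_of_ne hb] at hlt
    omega
  obtain ⟨q, rfl⟩ : ∃ q, l = q + N + 1 := ⟨l - (N + 1), by omega⟩
  exact ⟨q, by omega, by omega, hleast⟩

theorem mem_rightSet_succ_iff_of_ne (D : PromotionDiagram N U s e) (hb : b ≠ e t)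
    (hs : N ≤ s t) (htN : t < N) (hqt : q < t)
    (hq : IsLeast {a | s t < a ∧ IsStrictMinBefore (height (U t) t b) N a} (q + N + 1)) :
    j ∈ rightSet N U (t + 1) b ↔ j ∈ rightSet N U t b ∧ j ≠ q := by
  rcases lt_trichotomy j t with hjt | rfl | htj
  · have hiff := isStrictMinBefore_lower_iff (M := t + N) (i := j + N + 1)
      (h' := height (U (t + 1)) (t + 1) b) hs (by omega) (by omega) hq
      (fun k hNk _ => height_le_succ _ (by omega) b)
      (fun k hNk hks => D.height_succ_row_of_le_hit b (by omega) hks)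
      (fun k hsk hkN => D.height_succ_row_of_ne hb hsk hkN)
    have hjq : j + N + 1 ≠ q + N + 1 ↔ j ≠ q := by omega
    simp only [rightSet, Set.mem_ofPred_eq, hiff, hjt, hjt.trans t.lt_succ_self, true_and, hjq]
  · exact iff_of_false (D.notMem_rightSet_succ hs b) fun h => h.1.1.false
  · exact iff_of_false (fun h => by have := h.1; omega) (fun h => by have := h.1.1; omega)

theorem exists_cancelPair (D : PromotionDiagram N U s e) (hs : s t = p + N) (htN : t < N) :
    ∃ q < t, CancelPair (rightColor N U t) (rightColor N U (t + 1)) p q (e t) := by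
  have hsN : N ≤ s t := by omega
  have hne := Bool.not_ne_self (e t)
  obtain ⟨q, hpq, hqt, hq⟩ := D.exists_isLeast_isStrictMinBefore hne hs htN
  have hself := fun j => D.mem_rightSet_succ_self_iff (j := j) hs htN
  have hnot := fun j => D.mem_rightSet_succ_iff_of_ne (j := j) hne hsN htN hqt hq
  have hafter : ∀ j, p < j → j ∉ rightSet N U t (e t) := fun j => D.notMem_rightSet_of_hit_lt hs htN
  have hbetween : ∀ j, s t < j + N + 1 → j < q → j ∉ rightSet N U t (!e t) := by
    intro j hsj hjq hj
    have := hq.2 ⟨hsj, hj.2⟩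
    omega
  have hcolors : ∀ {P : Bool → Prop}, P (e t) → P (!e t) → ∀ b, P b := fun h h' b =>
    (eq_or_ne b (e t)).elim (· ▸ h) fun hb => Bool.eq_not_of_ne hb ▸ h'
  refine ⟨q, hqt, hpq, ?_, ?_, ?_, ?_, ?_, ?_, ?_⟩
  · exact (rightColor_eq_some_iff htN.le).2 (D.mem_rightSet_hit hs htN)
  · exact (rightColor_eq_some_iff htN.le).2 ⟨hqt, hq.1.2⟩
  · exact fun j hpj hjq =>
      rightColor_eq_none (hcolors (hafter j hpj) (hbetween j (by omega) hjq))
  · exact fun j hqj hj => hafter j (hpq.trans hqj) ((rightColor_eq_some_iff htN.le).1 hj)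
  · exact rightColor_eq_none (hcolors (fun h => ((hself p).1 h).2 rfl)
      fun h => hbetween p (by omega) hpq ((hnot p).1 h).1)
  · exact rightColor_eq_none (hcolors (fun h => hafter q hpq ((hself q).1 h).1)
      fun h => ((hnot q).1 h).2 rfl)
  · exact fun j hjp hjq => rightColor_congr htN htN.le
      (hcolors ((hself j).trans (and_iff_left hjp)) ((hnot j).trans (and_iff_left hjq)))

theorem exits_succ_of_hit_lt (D : PromotionDiagram N U s e) (htN : t < N) (hs : s t < N) :
    exits (rightColor N U (t + 1)) (t + 1) (leftSet N U (t + 1)) =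
      {s t} ∪ exits (rightColor N U t) t (leftSet N U t) := by
  have hleast := D.isLeast_leftSet hs
  have hcolor := D.rightColor_succ_of_hit_lt htN hs
  rw [exits_succ_of_some (by rw [hcolor, Function.update_self]), ← D.leftSet_eq_pop hs, hcolor,
    exits_congr (g := rightColor N U t) fun j hj => Function.update_of_ne hj.ne _ _]
  congr 1
  exact Set.ext fun x => ⟨fun h => h.unique hleast, fun h => h ▸ hleast⟩

/-- The fate, as seen from row `t`, of a column `j < N` whose letter in row `0` is not an `A`: it is
still to be hit, or it is among the `exits` of the unmatched `A`s left of column `N` under the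
unmatched letters right of it, or the letter in column `j + N` is matched there. -/
def IsAccounted (N : ℕ) (U : ℕ → ℕ → Option Bool) (s : ℕ → ℕ) (t j : ℕ) : Prop :=
  (∃ i, t ≤ i ∧ s i = j) ∨ j ∈ exits (rightColor N U t) t (leftSet N U t) ∨
    (j < t ∧ U t (j + N) ≠ none ∧ rightColor N U t j = none)

theorem isAccounted_zero (D : PromotionDiagram N U s e) (hj : j < N) (hU : U 0 j ≠ none) :
    IsAccounted N U s 0 j := by
  obtain ⟨i, -, -, hi⟩ := D.exists_hit_of_letter_ne j.zero_le le_rfl (by omega)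
    ((D.letter_first j).symm ▸ hU.symm)
  exact Or.inl ⟨i, i.zero_le, hi⟩

theorem isAccounted_succ_of_hit_lt (D : PromotionDiagram N U s e) (htN : t < N) (hs : s t < N)
    (h : IsAccounted N U s t j) : IsAccounted N U s (t + 1) j := by
  have hexits := D.exits_succ_of_hit_lt htN hs
  rcases h with ⟨i, hti, hi⟩ | hj | ⟨hjt, hU, hj⟩
  · rcases hti.eq_or_lt with rfl | hti
    · exact Or.inr (Or.inl (hexits ▸ Or.inl hi.symm))
    · exact Or.inl ⟨i, hti, hi⟩
  · exact Or.inr (Or.inl (hexits ▸ Or.inr hj))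
  · refine Or.inr (Or.inr ⟨by omega, ?_, ?_⟩)
    · rwa [D.letter_succ t (j + N) (by omega) (by omega) (by omega)]
    · rwa [D.rightColor_succ_of_hit_lt htN hs, Function.update_of_ne hjt.ne]

theorem isAccounted_succ_of_le_hit (D : PromotionDiagram N U s e) (hjN : j < N) (htN : t < N)
    (hs : N ≤ s t) (h : IsAccounted N U s t j) : IsAccounted N U s (t + 1) j := by
  obtain ⟨p, hp⟩ : ∃ p, s t = p + N := ⟨s t - N, by omega⟩
  obtain ⟨q, hqt, hpair⟩ := D.exists_cancelPair hp htN
  have hpq := hpair.lt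
  have hcolor_t : rightColor N U (t + 1) t = none :=
    rightColor_eq_none (D.notMem_rightSet_succ hs)
  have hletter : ∀ i < t, i ≠ p → U (t + 1) (i + N) = U t (i + N) := fun i hit hip =>
    D.letter_succ t (i + N) (by omega) (by omega) (by omega)
  rcases h with ⟨i, hti, hi⟩ | hj | ⟨hjt, hU, hj⟩
  · refine Or.inl ⟨i, hti.lt_of_ne ?_, hi⟩
    rintro rfl
    omega
  · rw [D.leftSet_of_le_hit htN hs, hpair.exits_insert hqt le_rfl fun b x hx => hx.1,
      ← exits_succ_of_none hcolor_t] at hj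
    rcases hj with rfl | rfl | hj
    · exact Or.inr (Or.inr ⟨j.lt_succ_self, by simp [D.letter_last], hcolor_t⟩)
    · refine Or.inr (Or.inr ⟨by omega, ?_, hpair.right_deleted⟩)
      have hright := (Option.filter_eq_some_iff.1 hpair.right).1
      simp [hletter j hqt hpq.ne', hright]
    · exact Or.inr (Or.inl hj)
  · have hjp : j ≠ p := by
      rintro rfl
      exact absurd (hj.symm.trans hpair.left) (by simp)
    refine Or.inr (Or.inr ⟨by omega, by rwa [hletter j hjt hjp], ?_⟩)
    rcases eq_or_ne j q with rfl | hjq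
    · exact hpair.right_deleted
    · rwa [hpair.eq_off j hjp hjq]

theorem isAccounted (D : PromotionDiagram N U s e) (hj : j < N) (hU : U 0 j ≠ none)
    (ht : t ≤ N) : IsAccounted N U s t j := by
  induction t with
  | zero => exact D.isAccounted_zero hj hU
  | succ t ih =>
    rcases lt_or_ge (s t) N with hs | hs
    · exact D.isAccounted_succ_of_hit_lt ht hs (ih (by omega))
    · exact D.isAccounted_succ_of_le_hit hj ht hs (ih (by omega))

theorem A_of_hit_eq_add {i : ℕ} (D : PromotionDiagram N U s e) (hi : i < N) (hs : s i = j + N) :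
    U 0 j = none := by
  by_contra hU
  have hij := D.hit_lt i
  rcases D.isAccounted (by omega) hU le_rfl with ⟨k, hNk, hk⟩ | hj | ⟨-, hne, -⟩
  · have := D.lt_hit k
    omega
  · have hempty : leftSet N U N = fun _ => ∅ :=
      funext fun b => Set.eq_empty_of_forall_notMem fun p hp => hp.1.not_gt hp.2.1
    rw [hempty, exits_empty] at hj
    exact hj
  · exact hne (D.letter_eq_none_of_le hi (by omega) (by omega) (hs ▸ D.letter_succ_hit i))

theorem letter_eq_some_of_le (D : PromotionDiagram N U s e) (htt : t ≤ t') (hp : t' ≤ p)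
    (hpN : p < t + N) (hU : U t' p = some b) : U t p = some b := by
  by_contra hne
  obtain ⟨i, hti, hit, rfl⟩ := D.exists_hit_of_letter_ne htt hp hpN fun h => hne (h ▸ hU)
  have hnone := D.letter_eq_none_of_le hit hp (by omega) (D.letter_succ_hit i)
  exact absurd (hnone.symm.trans hU) (by simp)

theorem letter_zero_hit (D : PromotionDiagram N U s e) (hs : s t < N) :
    U 0 (s t) = some (e t) :=
  D.letter_eq_some_of_le t.zero_le (D.lt_hit t).le (by omega) (D.letter_hit t)

theorem hitColor_eq_of_hit_eq_add (D : PromotionDiagram N U s e) (ht : t < N)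
    (hs : s t = j + N) : e t = e j := by
  have hlt := D.hit_lt t
  have hletter : U (j + 1) (j + N) = some (e t) :=
    D.letter_eq_some_of_le (by omega) (by omega) (by omega) (hs ▸ D.letter_hit t)
  exact Option.some_injective _ (hletter.symm.trans (D.letter_last j))

end PromotionDiagram

/-! ### Kreweras words -/

/-- The letter of a given colour. -/
def KLetter.ofColor (b : Bool) : KLetter := if b then B else C

theorem KLetter.ofColor_eq_B_or_eq_C (b : Bool) : ofColor b = B ∨ ofColor b = C := by
  cases b <;> simp [ofColor]

theorem KLetter.ofColor_ne_A (b : Bool) : ofColor b ≠ A := by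
  cases b <;> simp [ofColor]

theorem KLetter.eq_ofColor_of_color_eq_some {l : KLetter} {b : Bool} (h : l.color = some b) :
    l = ofColor b := by
  cases l <;> cases b <;> simp_all [color, ofColor]

theorem KLetter.color_eq_none_iff {l : KLetter} : l.color = none ↔ l = A := by
  cases l <;> simp [color]

/-- The colour of the letter of `w` in position `q`, counted from `0`; it is `none` beyond the end
of `w`. -/
def letterColor (w : List KLetter) (q : ℕ) : Option Bool := (w.getD q A).color

theorem height_letterColor {w : List KLetter} {k : ℕ} (hk : k ≤ w.length) (b : Bool) :
    height (letterColor w) 0 b k = (w.take k).count A - (w.take k).count (ofColor b) := by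
  induction k with
  | zero => simp [height_self]
  | succ k ih =>
    rw [height_succ _ k.zero_le, ih (by omega), List.take_add_one, List.getElem?_eq_getElem hk,
      letterColor, List.getD_eq_getElem _ _ hk, Option.toList_some, List.count_append,
      List.count_append]
    cases w[k] <;> cases b <;> simp [color, ofColor, rise] <;> ring

theorem count_A_add_count_B_add_count_C (w : List KLetter) :
    w.count A + w.count B + w.count C = w.length := by
  induction w with
  | nil => rfl
  | cons l w ih => cases l <;> simp <;> omega

theorem isKrewerasWord_iff {n : ℕ} {w : List KLetter} :
    IsKrewerasWord n w ↔ w.length = 3 * n ∧ (∀ b, height (letterColor w) 0 b (3 * n) = 0) ∧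
      ∀ b, ∀ k ≤ 3 * n, 0 ≤ height (letterColor w) 0 b k := by
  have hcount := count_A_add_count_B_add_count_C w
  constructor
  · rintro ⟨hlen, hA, hB, hC, hprefix⟩
    refine ⟨hlen, fun b => ?_, fun b k hk => ?_⟩
    · rw [height_letterColor hlen.ge, List.take_of_length_le hlen.le]
      cases b <;> simp [ofColor, hA, hB, hC]
    · have := hprefix k
      rw [height_letterColor (by omega)]
      cases b <;> simp [ofColor, this]
  · rintro ⟨hlen, hlast, hnonneg⟩
    have htotal : ∀ b, w.count A = w.count (ofColor b) := by
      intro b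
      have := hlast b
      rw [height_letterColor hlen.ge, List.take_of_length_le hlen.le] at this
      omega
    have hB : w.count A = w.count B := htotal true
    have hC : w.count A = w.count C := htotal false
    refine ⟨hlen, by omega, by omega, by omega, fun k => ?_⟩
    rcases le_total k (3 * n) with hk | hk
    · have hle : ∀ b, (w.take k).count (ofColor b) ≤ (w.take k).count A := by
        intro b
        have := hnonneg b k hk
        rw [height_letterColor (by omega)] at this
        omega
      exact ⟨hle true, hle false⟩
    · rw [List.take_of_length_le (by omega)]
      omega

theorem isLeast_kiota_of_height_eq_zero {w : List KLetter} {m : ℕ} {c : Bool} (hm : 1 ≤ m)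
    (hmw : m ≤ w.length) (hzero : height (letterColor w) 0 c m = 0) :
    IsLeast {k | 1 ≤ k ∧ ∃ b, height (letterColor w) 0 b k = 0} (kiota w) := by
  let tied : ℕ → Bool := fun k => decide (1 ≤ k) &&
    (((w.take k).count A == (w.take k).count B) || ((w.take k).count A == (w.take k).count C))
  have htied : ∀ k ≤ w.length,
      (tied k = true ↔ 1 ≤ k ∧ ∃ b, height (letterColor w) 0 b k = 0) := by
    intro k hk
    simp only [tied, height_letterColor hk, Bool.exists_bool, ofColor, sub_eq_zero, Nat.cast_inj,
      Bool.and_eq_true, Bool.or_eq_true, decide_eq_true_eq, beq_iff_eq]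
    simp [or_comm]
  have hkiota : kiota w = ((List.range (w.length + 1)).find? tied).getD 0 := by
    rw [kiota, List.headD_eq_head?_getD, List.head?_filter]
  cases hfind : (List.range (w.length + 1)).find? tied with
  | none =>
    exact absurd ((htied m hmw).2 ⟨hm, c, hzero⟩)
      (List.find?_eq_none.1 hfind m (List.mem_range.2 (by omega)))
  | some k =>
    obtain ⟨hk, hkw, hbefore⟩ := List.find?_range_eq_some.1 hfind
    have hkw : k ≤ w.length := Nat.lt_succ_iff.1 (List.mem_range.1 hkw)
    rw [hkiota, hfind, Option.getD_some]
    refine ⟨(htied k hkw).1 hk, fun l hl => ?_⟩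
    by_contra! hlk
    have hnot := hbefore l hlk
    rw [(htied l (by omega)).2 hl] at hnot
    exact absurd hnot (by decide)

/-- The position, counted from `0`, of the letter that promotion moves to the end of `w`. -/
def hit (w : List KLetter) : ℕ := kiota w - 1

/-- The colour of the letter that promotion moves to the end of `w`; the default `true` is not
attained for Kreweras words. -/
def hitColor (w : List KLetter) : Bool := (letterColor w (hit w)).getD true

namespace IsKrewerasWord

variable {n : ℕ} {w : List KLetter} {b : Bool} {k : ℕ}

theorem length_eq (hw : IsKrewerasWord n w) : w.length = 3 * n := hw.1

theorem height_last (hw : IsKrewerasWord n w) (b : Bool) :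
    height (letterColor w) 0 b (3 * n) = 0 :=
  (isKrewerasWord_iff.1 hw).2.1 b

theorem height_nonneg (hw : IsKrewerasWord n w) (b : Bool) (hk : k ≤ 3 * n) :
    0 ≤ height (letterColor w) 0 b k :=
  (isKrewerasWord_iff.1 hw).2.2 b k hk

theorem isLeast_kiota (hw : IsKrewerasWord n w) (hn : 0 < n) :
    IsLeast {k | 1 ≤ k ∧ ∃ b, height (letterColor w) 0 b k = 0} (kiota w) :=
  isLeast_kiota_of_height_eq_zero (by omega) hw.length_eq.ge (hw.height_last true)

theorem letterColor_zero (hw : IsKrewerasWord n w) (hn : 0 < n) : letterColor w 0 = none :=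
  eq_none_of_height_nonneg fun b => hw.height_nonneg b (by omega)

theorem two_le_kiota (hw : IsKrewerasWord n w) (hn : 0 < n) : 2 ≤ kiota w := by
  obtain ⟨hone, b, hzero⟩ := (hw.isLeast_kiota hn).1
  refine hone.lt_of_ne fun h => ?_
  rw [← h, height_succ _ le_rfl, hw.letterColor_zero hn, height_self] at hzero
  simp [rise] at hzero

theorem hit_pos (hw : IsKrewerasWord n w) (hn : 0 < n) : 0 < hit w :=
  Nat.sub_pos_of_lt (hw.two_le_kiota hn)

theorem kiota_eq_hit_add_one (hw : IsKrewerasWord n w) (hn : 0 < n) : kiota w = hit w + 1 :=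
  (Nat.sub_add_cancel (hw.isLeast_kiota hn).1.1).symm

theorem hit_lt (hw : IsKrewerasWord n w) (hn : 0 < n) : hit w < 3 * n := by
  have hle := (hw.isLeast_kiota hn).2 ⟨by omega, true, hw.height_last true⟩
  rwa [hw.kiota_eq_hit_add_one hn] at hle

theorem height_pos (hw : IsKrewerasWord n w) (hn : 0 < n) (b : Bool) (hk : 0 < k)
    (hkw : k ≤ hit w) : 0 < height (letterColor w) 0 b k := by
  have hlt := hw.hit_lt hn
  refine (hw.height_nonneg b (by omega)).lt_of_ne' fun hzero => ?_
  have hle := (hw.isLeast_kiota hn).2 ⟨hk, b, hzero⟩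
  rw [hw.kiota_eq_hit_add_one hn] at hle
  omega

theorem exists_letterColor_hit (hw : IsKrewerasWord n w) (hn : 0 < n) :
    ∃ b, letterColor w (hit w) = some b ∧ height (letterColor w) 0 b (hit w + 1) = 0 := by
  obtain ⟨-, b, hzero⟩ := (hw.isLeast_kiota hn).1
  rw [hw.kiota_eq_hit_add_one hn] at hzero
  have hpos := hw.height_pos hn b (hw.hit_pos hn) le_rfl
  have hstep := height_succ (letterColor w) (hit w).zero_le b
  exact ⟨b, eq_some_of_rise_neg (by omega), hzero⟩

theorem letterColor_hit (hw : IsKrewerasWord n w) (hn : 0 < n) :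
    letterColor w (hit w) = some (hitColor w) := by
  obtain ⟨b, hb, -⟩ := hw.exists_letterColor_hit hn
  rw [hitColor, hb, Option.getD_some]

theorem height_hit_succ (hw : IsKrewerasWord n w) (hn : 0 < n) :
    height (letterColor w) 0 (hitColor w) (hit w + 1) = 0 := by
  obtain ⟨b, hb, hzero⟩ := hw.exists_letterColor_hit hn
  rwa [hitColor, hb, Option.getD_some]

theorem length_pro (hw : IsKrewerasWord n w) (hn : 0 < n) : (pro w).length = 3 * n := by
  simp only [pro, List.length_append, List.length_set, List.length_drop, hw.length_eq,
    List.length_singleton]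
  omega

theorem letterColor_pro_last (hw : IsKrewerasWord n w) (hn : 0 < n) :
    letterColor (pro w) (3 * n - 1) = some (hitColor w) := by
  have hlen := hw.length_eq
  rw [← hw.letterColor_hit hn, letterColor, pro, List.getD_append_right _ _ _ _ (by simp; omega)]
  simp [hlen, letterColor, hit]

theorem letterColor_pro (hw : IsKrewerasWord n w) (hn : 0 < n) (hk : 0 < k) (hkn : k < 3 * n) :
    letterColor (pro w) (k - 1) = if k = hit w then none else letterColor w k := by
  have hlen := hw.length_eq
  have hpos := hw.hit_pos hn
  rw [letterColor, pro, List.getD_append _ _ _ _ (by simp; omega),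
    List.getD_eq_getElem _ _ (by simp; omega), List.getElem_set]
  have hindex : kiota w - 2 = k - 1 ↔ k = hit w := by rw [hit] at *; omega
  simp only [hindex, List.getElem_drop, Nat.add_sub_cancel' hk, apply_ite color,
    letterColor, List.getD_eq_getElem w A (hlen ▸ hkn)]
  rfl

theorem height_pro_of_le_hit (hw : IsKrewerasWord n w) (hn : 0 < n) (b : Bool) (hk : 0 < k)
    (hkw : k ≤ hit w) :
    height (letterColor (pro w)) 0 b (k - 1) = height (letterColor w) 0 b k - 1 := by
  have hlt := hw.hit_lt hn
  rw [← height_shift]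
  refine height_promotion_of_le (hw.letterColor_zero hn) (fun i hi hir => ?_) b hk hkw
  rw [hw.letterColor_pro hn hi (by omega), if_neg hir.ne]

theorem height_pro_of_hit_lt (hw : IsKrewerasWord n w) (hn : 0 < n) (b : Bool)
    (hwk : hit w < k) (hkn : k ≤ 3 * n) :
    height (letterColor (pro w)) 0 b (k - 1) =
      height (letterColor w) 0 b k + if b = hitColor w then 1 else 0 := by
  rw [← height_shift]
  refine height_promotion_of_lt (hw.hit_pos hn) (hw.letterColor_zero hn)
    (hw.letterColor_hit hn) ?_ (fun i hi hin hir => ?_) b hwk hkn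
  · rw [hw.letterColor_pro hn (hw.hit_pos hn) (hw.hit_lt hn), if_pos rfl]
  · rw [hw.letterColor_pro hn hi hin, if_neg hir]

theorem height_pro_last (hw : IsKrewerasWord n w) (hn : 0 < n) (b : Bool) :
    height (letterColor (pro w)) 0 b (3 * n) = 0 := by
  have hstep := height_succ (letterColor (pro w)) (3 * n - 1).zero_le b
  rw [Nat.sub_add_cancel (by omega), hw.height_pro_of_hit_lt hn b (hw.hit_lt hn) le_rfl,
    hw.height_last, hw.letterColor_pro_last hn] at hstep
  rw [hstep, rise]
  simp only [eq_comm (a := b)]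
  split_ifs <;> rfl

theorem isKrewerasWord_pro (hw : IsKrewerasWord n w) (hn : 0 < n) : IsKrewerasWord n (pro w) := by
  refine isKrewerasWord_iff.2 ⟨hw.length_pro hn, hw.height_pro_last hn, fun b k hk => ?_⟩
  rcases hk.eq_or_lt with rfl | hk
  · rw [hw.height_pro_last hn]
  rcases le_or_gt (k + 1) (hit w) with hkw | hkw
  · have hpos := hw.height_pos hn b k.succ_pos hkw
    have hpro := hw.height_pro_of_le_hit hn b k.succ_pos hkw
    rw [Nat.succ_eq_add_one, Nat.add_sub_cancel] at *
    omega
  · have hnonneg := hw.height_nonneg b (k := k + 1) hk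
    have hpro := hw.height_pro_of_hit_lt hn b hkw hk
    rw [Nat.add_sub_cancel] at hpro
    rw [hpro]
    split_ifs <;> omega

theorem iterate_pro (hw : IsKrewerasWord n w) (hn : 0 < n) (t : ℕ) :
    IsKrewerasWord n (pro^[t] w) := by
  induction t with
  | zero => exact hw
  | succ t ih => exact Function.iterate_succ_apply' pro t w ▸ ih.isKrewerasWord_pro hn

theorem promotionDiagram (hw : IsKrewerasWord n w) (hn : 0 < n) :
    PromotionDiagram (3 * n) (fun t p => letterColor (pro^[t] w) (p - t))
      (fun t => hit (pro^[t] w) + t) (fun t => hitColor (pro^[t] w)) := by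
  have hrow := hw.iterate_pro hn
  have hletter_succ : ∀ t p, t < p → p < t + 3 * n → letterColor (pro^[t + 1] w) (p - (t + 1)) =
      if p - t = hit (pro^[t] w) then none else letterColor (pro^[t] w) (p - t) := by
    intro t p htp hp
    rw [Function.iterate_succ_apply', ← Nat.sub_sub]
    exact (hrow t).letterColor_pro hn (by omega) (by omega)
  constructor <;> intro t
  case lt_hit => exact Nat.lt_add_of_pos_left ((hrow t).hit_pos hn)
  case hit_lt => have := (hrow t).hit_lt hn; omega
  case letter_hit => simpa using (hrow t).letterColor_hit hn
  case letter_last =>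
    rw [Function.iterate_succ_apply', show t + 3 * n - (t + 1) = 3 * n - 1 by omega]
    exact (hrow t).letterColor_pro_last hn
  case letter_succ_hit =>
    have hlt := (hrow t).hit_lt hn
    have hpos := (hrow t).hit_pos hn
    rw [hletter_succ t _ (by omega) (by omega), if_pos (by omega)]
  case letter_succ =>
    intro p htp hp hps
    rw [hletter_succ t p htp hp, if_neg (by omega)]
  case height_last =>
    intro b
    rw [height_shift, Nat.add_sub_cancel_left, (hrow t).height_last]
  case height_nonneg =>
    intro b p htp hp
    rw [height_shift]
    exact (hrow t).height_nonneg b (by omega)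
  case height_pos =>
    intro b p htp hp
    rw [height_shift]
    exact (hrow t).height_pos hn b (by omega) (by omega)
  case height_hit_succ =>
    rw [height_shift, Nat.add_right_comm, Nat.add_sub_cancel]
    exact (hrow t).height_hit_succ hn

theorem keps_add_one (hw : IsKrewerasWord n w) (hn : 0 < n) (t : ℕ) :
    keps w (t + 1) = ofColor (hitColor (pro^[t] w)) :=
  eq_ofColor_of_color_eq_some ((hw.iterate_pro hn t).letterColor_hit hn)

theorem ksigma_add_one (hw : IsKrewerasWord n w) (hn : 0 < n) (t : ℕ) :
    ksigma n w (t + 1) = (hit (pro^[t] w) + t) % (3 * n) + 1 := by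
  rw [ksigma, Nat.add_sub_cancel, (hw.iterate_pro hn t).kiota_eq_hit_add_one hn]
  congr 2
  omega

theorem getD_hit_eq_keps (hw : IsKrewerasWord n w) (hn : 0 < n) {t : ℕ}
    (ht : hit (pro^[t] w) + t < 3 * n) : w.getD (hit (pro^[t] w) + t) A = keps w (t + 1) := by
  rw [hw.keps_add_one hn]
  exact eq_ofColor_of_color_eq_some ((hw.promotionDiagram hn).letter_zero_hit ht)

end IsKrewerasWord

/-- For every `i ∈ {1, …, 3n}`: `ε_w(i) ∈ {B, C}`; if `w_{σ_w(i)} ≠ A` then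
`ε_w(i) = w_{σ_w(i)}`, and if `w_{σ_w(i)} = A` then `ε_w(i) = w_{σ_w(σ_w(i))}`
(letters are 1-indexed). -/
theorem keps_properties (n : ℕ) (w : List KLetter) (hw : IsKrewerasWord n w)
    (i : ℕ) (hi1 : 1 ≤ i) (hi2 : i ≤ 3 * n) :
    (keps w i = KLetter.B ∨ keps w i = KLetter.C) ∧
    (w.getD (ksigma n w i - 1) KLetter.A ≠ KLetter.A →
      keps w i = w.getD (ksigma n w i - 1) KLetter.A) ∧
    (w.getD (ksigma n w i - 1) KLetter.A = KLetter.A →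
      keps w i = w.getD (ksigma n w (ksigma n w i) - 1) KLetter.A) := by
  have hn : 0 < n := by omega
  have D := hw.promotionDiagram hn
  obtain ⟨t, rfl⟩ : ∃ t, i = t + 1 := ⟨i - 1, by omega⟩
  refine ⟨hw.keps_add_one hn t ▸ ofColor_eq_B_or_eq_C _, ?_⟩
  rw [hw.ksigma_add_one hn, Nat.add_sub_cancel]
  rcases lt_or_ge (hit (pro^[t] w) + t) (3 * n) with hlt | hge
  · rw [Nat.mod_eq_of_lt hlt, hw.getD_hit_eq_keps hn hlt, hw.keps_add_one hn]
    exact ⟨fun _ => rfl, fun hA => absurd hA (ofColor_ne_A _)⟩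
  · obtain ⟨j, hj⟩ : ∃ j, hit (pro^[t] w) + t = j + 3 * n := Nat.exists_eq_add_of_le' hge
    have hjn : j < 3 * n := by have := D.hit_lt t; omega
    have hA : letterColor w j = none := D.A_of_hit_eq_add hi2 hj
    have hhit : hit (pro^[j] w) + j < 3 * n := D.hit_lt_of_A hjn hA
    have heps : keps w (t + 1) = keps w (j + 1) := by
      rw [hw.keps_add_one hn, hw.keps_add_one hn, D.hitColor_eq_of_hit_eq_add hi2 hj]
    rw [hj, Nat.add_mod_right, Nat.mod_eq_of_lt hjn, hw.ksigma_add_one hn, Nat.add_sub_cancel,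
      Nat.mod_eq_of_lt hhit, hw.getD_hit_eq_keps hn hhit]
    exact ⟨fun hne => absurd (color_eq_none_iff.1 hA) hne, fun _ => heps⟩
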